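/- On an open subset of ℝ³ with coordinates (x¹, x², x³) = (x, y, z), let the metric be given by g = (dz + β₁dx¹ + β₂dx²)² + h_{ab}dx^adx^b, i.e. g_{33} = 1, g_{a3} = g_{3a} = β_a and g_{ab} = h_{ab} + β_aβ_b for a,b ∈ {1,2}, where β₁, β₂ are smooth functions of (x¹,x²) only (independent of z) and (h_{ab}) is a smooth positive-definite 2×2 matrix-valued function of (x¹,x²,z). Let β > 0 be a smooth function of (x¹,x²) only, let c ∈ ℝ, and let ε = ±1. Then the symmetric tensor field T^{ij} := ε·(β·(det(h_{ab}))^{−1/2}·δ^i_z δ^j_z + c·g^{ij}) satisfies the momentum constraint ∇_j T^{ij} = 0. -/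

import Mathlib

open Matrix

noncomputable section

abbrev V3 := Fin 3 → ℝ

/-- Partial derivative `∂ᵢ f` on `ℝ³`. -/
def pd (i : Fin 3) (f : V3 → ℝ) (x : V3) : ℝ := fderiv ℝ f x (Pi.single i 1)

/-- Christoffel symbols `Γ^i_{jk} = (1/2) g^{il}(∂_j g_{lk} + ∂_k g_{jl} - ∂_l g_{jk})`. -/
def christoffel (g : V3 → Matrix (Fin 3) (Fin 3) ℝ) (i j k : Fin 3) (x : V3) : ℝ :=
  (1 / 2) * ∑ l, (g x)⁻¹ i l *
    (pd j (fun y => g y l k) x + pd k (fun y => g y j l) x - pd l (fun y => g y j k) x)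

/-- `|g| = (det g)^{1/2}`. -/
def sqrtDet (g : V3 → Matrix (Fin 3) (Fin 3) ℝ) (x : V3) : ℝ := Real.sqrt (g x).det

/-- Covariant divergence of a contravariant symmetric 2-tensor:
`∇_j T^{ij} = |g|⁻¹ ∂_j(|g| T^{ij}) + Γ^i_{jk} T^{jk}`. -/
def covDivUp (g T : V3 → Matrix (Fin 3) (Fin 3) ℝ) (i : Fin 3) (x : V3) : ℝ :=
  (sqrtDet g x)⁻¹ * (∑ j, pd j (fun y => sqrtDet g y * T y i j) x) +
    ∑ j, ∑ k, christoffel g i j k x * T x j k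

/-- Covariant divergence in mixed form, for a contravariant tensor `T^{ij}`:
`∇_j T_i^{ j} = |g|⁻¹ ∂_j(|g| g_{ik} T^{kj}) - (1/2) T^{jk} ∂_i g_{jk}`. -/
def covDivLow (g T : V3 → Matrix (Fin 3) (Fin 3) ℝ) (i : Fin 3) (x : V3) : ℝ :=
  (sqrtDet g x)⁻¹ * (∑ j, pd j (fun y => sqrtDet g y * (∑ k, g y i k * T y k j)) x) -
    (1 / 2) * ∑ j, ∑ k, T x j k * pd i (fun y => g y j k) x

/-!
Lowering the free index turns `∇_j T^{ij} = 0` into the vanishing of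
`|g|⁻¹ ∂_j(|g| T_i^j) - ½ T^{jk} ∂_i g_{jk}`, which is linear in `T` and needs no derivative of the
inverse metric. For `T = g⁻¹` the mixed tensor is the identity and the expression vanishes by
Jacobi's formula `∂_i |g| = ½ |g| g^{jk} ∂_i g_{jk}`. For `T = (b / |g|) ∂_z ⊗ ∂_z` with `∂_z b = 0`
it equals `(b / |g|) (∂_z g_{iz} - ½ ∂_i g_{zz})`, which vanishes when the `z`-lines are geodesics.
In the metric at hand `g_{zz} = 1` and `∂_z g_{iz} = 0`, and `|g| = (det h)^{1/2}`.
-/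

open scoped Topology

section Determinant

variable {𝕜 E n : Type*} [NontriviallyNormedField 𝕜] [NormedAddCommGroup E] [NormedSpace 𝕜 E]
  [Fintype n] [DecidableEq n] {A : E → Matrix n n 𝕜} {x : E}

theorem det_updateRow_eq_sum_adjugate {R : Type*} [CommRing R] (M : Matrix n n R) (i : n)
    (v : n → R) : (M.updateRow i v).det = ∑ j, M.adjugate j i * v j := by
  rw [← cramer_transpose_apply, cramer_eq_adjugate_mulVec, ← adjugate_transpose]
  rfl

theorem hasFDerivAt_det {A' : n → n → E →L[𝕜] 𝕜}
    (hA : ∀ i j, HasFDerivAt (fun y => A y i j) (A' i j) x) :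
    HasFDerivAt (fun y => (A y).det) (∑ i, ∑ j, (A x).adjugate j i • A' i j) x := by
  let detRow : ContinuousMultilinearMap 𝕜 (fun _ : n => n → 𝕜) 𝕜 :=
    ⟨(detRowAlternating (n := n) (R := 𝕜)).toMultilinearMap, Continuous.matrix_det continuous_id⟩
  have hrow (i : n) : HasFDerivAt (fun y => A y i) (ContinuousLinearMap.pi (A' i)) x :=
    hasFDerivAt_pi.2 (hA i)
  refine (HasFDerivAt.multilinear_comp (f := detRow) hrow).congr_fderiv ?_
  ext v
  simp only [_root_.sum_apply]
  exact Finset.sum_congr rfl fun i _ => by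
    simpa using! det_updateRow_eq_sum_adjugate (A x) i fun j => A' i j v

theorem differentiableAt_det (hA : ∀ i j, DifferentiableAt 𝕜 (fun y => A y i j) x) :
    DifferentiableAt 𝕜 (fun y => (A y).det) x :=
  (hasFDerivAt_det fun i j => (hA i j).hasFDerivAt).differentiableAt

theorem differentiableAt_adjugate_apply (hA : ∀ i j, DifferentiableAt 𝕜 (fun y => A y i j) x)
    (i j : n) : DifferentiableAt 𝕜 (fun y => (A y).adjugate i j) x := by
  simp only [adjugate_apply]
  refine differentiableAt_det fun k l => ?_
  by_cases hk : k = j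
  · simp [hk]
  · simpa [updateRow_ne hk] using hA k l

theorem differentiableAt_inv_apply (hA : ∀ i j, DifferentiableAt 𝕜 (fun y => A y i j) x)
    (hdet : (A x).det ≠ 0) (i j : n) : DifferentiableAt 𝕜 (fun y => (A y)⁻¹ i j) x := by
  simp only [inv_def, Ring.inverse_eq_inv', Matrix.smul_apply, smul_eq_mul]
  exact ((differentiableAt_det hA).inv hdet).mul (differentiableAt_adjugate_apply hA i j)

end Determinant

section PartialDerivative

variable {f g : V3 → ℝ} {x : V3}

theorem pd_congr (i : Fin 3) (hfg : f =ᶠ[𝓝 x] g) : pd i f x = pd i g x := by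
  rw [pd, pd, hfg.fderiv_eq]

theorem pd_const (i : Fin 3) (a : ℝ) : pd i (fun _ => a) x = 0 := by
  simp [pd]

theorem pd_add (i : Fin 3) (hf : DifferentiableAt ℝ f x) (hg : DifferentiableAt ℝ g x) :
    pd i (fun y => f y + g y) x = pd i f x + pd i g x := by
  simp [pd, fderiv_fun_add hf hg]

theorem pd_mul (i : Fin 3) (hf : DifferentiableAt ℝ f x) (hg : DifferentiableAt ℝ g x) :
    pd i (fun y => f y * g y) x = f x * pd i g x + g x * pd i f x := by
  simp [pd, fderiv_fun_mul hf hg]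

theorem pd_const_mul (i : Fin 3) (a : ℝ) (f : V3 → ℝ) :
    pd i (fun y => a * f y) x = a * pd i f x := by
  have hfderiv := congrFun (fderiv_const_smul_field (𝕜 := ℝ) (f := f) a) x
  simpa [pd] using! congrArg (fun L => L (Pi.single i 1)) hfderiv

theorem pd_sum {ι : Type*} [Fintype ι] {F : ι → V3 → ℝ} (i : Fin 3)
    (hF : ∀ l, DifferentiableAt ℝ (F l) x) :
    pd i (fun y => ∑ l, F l y) x = ∑ l, pd i (F l) x := by
  simp [pd, fderiv_fun_sum fun l _ => hF l]

theorem pd_eq_zero_of_update_eq {i : Fin 3} (hf : DifferentiableAt ℝ f x)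
    (hind : ∀ t, f (Function.update x i t) = f x) : pd i f x = 0 := by
  have hline (t : ℝ) : x + t • Pi.single i 1 = Function.update x i (x i + t) := by
    ext j
    obtain rfl | hj := eq_or_ne j i <;> simp [*]
  rw [pd, ← hf.lineDeriv_eq_fderiv, lineDeriv]
  simp [hline, hind]

end PartialDerivative

section Metric

variable {g : V3 → Matrix (Fin 3) (Fin 3) ℝ} {x : V3}

theorem sqrtDet_ne_zero (hdet : 0 < (g x).det) : sqrtDet g x ≠ 0 :=
  (Real.sqrt_pos.2 hdet).ne'

theorem differentiableAt_sqrtDet (hg : ∀ i j, DifferentiableAt ℝ (fun y => g y i j) x)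
    (hdet : 0 < (g x).det) : DifferentiableAt ℝ (sqrtDet g) x :=
  (differentiableAt_det hg).sqrt hdet.ne'

theorem eventually_det_pos (hg : ∀ i j, DifferentiableAt ℝ (fun y => g y i j) x)
    (hdet : 0 < (g x).det) : ∀ᶠ y in 𝓝 x, 0 < (g y).det :=
  (differentiableAt_det hg).continuousAt.eventually_const_lt hdet

theorem pd_sqrtDet (hg : ∀ i j, DifferentiableAt ℝ (fun y => g y i j) x)
    (hdet : 0 < (g x).det) (i : Fin 3) :
    pd i (sqrtDet g) x =
      sqrtDet g x * ((1 / 2) * ∑ j, ∑ k, (g x)⁻¹ k j * pd i (fun y => g y j k) x) := by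
  have hderiv : pd i (sqrtDet g) x =
      1 / (2 * sqrtDet g x) * ∑ j, ∑ k, (g x).adjugate k j * pd i (fun y => g y j k) x := by
    have h := ((hasFDerivAt_det fun j k => (hg j k).hasFDerivAt).sqrt hdet.ne').fderiv
    simpa [pd, _root_.sum_apply] using! congrArg (fun L => L (Pi.single i 1)) h
  have hadj (j k : Fin 3) : (g x).adjugate k j = sqrtDet g x ^ 2 * (g x)⁻¹ k j := by
    rw [sqrtDet, Real.sq_sqrt hdet.le, inv_def, Ring.inverse_eq_inv', Matrix.smul_apply,
      smul_eq_mul, mul_inv_cancel_left₀ hdet.ne']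
  have hs := sqrtDet_ne_zero hdet
  simp only [hderiv, hadj, mul_assoc, ← Finset.mul_sum]
  field_simp

theorem sum_mul_christoffel (hdet : (g x).det ≠ 0) (i j k : Fin 3) :
    ∑ l, g x i l * christoffel g l j k x =
      (1 / 2) * (pd j (fun y => g y i k) x + pd k (fun y => g y j i) x
        - pd i (fun y => g y j k) x) := by
  set w : Fin 3 → ℝ := fun m =>
    pd j (fun y => g y m k) x + pd k (fun y => g y j m) x - pd m (fun y => g y j k) x
  have hw : g x *ᵥ ((g x)⁻¹ *ᵥ w) = w := by
    rw [mulVec_mulVec, mul_nonsing_inv _ hdet.isUnit, one_mulVec]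
  calc ∑ l, g x i l * christoffel g l j k x
      = (1 / 2) * (g x *ᵥ ((g x)⁻¹ *ᵥ w)) i := by
        simp only [christoffel, mulVec, dotProduct, Finset.mul_sum, w]
        simp only [mul_left_comm]
    _ = (1 / 2) * w i := by rw [hw]

theorem sum_mul_sum_christoffel_mul {M : Matrix (Fin 3) (Fin 3) ℝ}
    (hsymm : ∀ᶠ y in 𝓝 x, (g y).IsSymm) (hdet : (g x).det ≠ 0) (hM : M.IsSymm) (i : Fin 3) :
    ∑ l, g x i l * ∑ j, ∑ k, christoffel g l j k x * M j k =
      ∑ j, ∑ k, M k j * pd j (fun y => g y i k) x -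
        (1 / 2) * ∑ j, ∑ k, M j k * pd i (fun y => g y j k) x := by
  have hlower : ∑ l, g x i l * ∑ j, ∑ k, christoffel g l j k x * M j k =
      (1 / 2) * ∑ j, ∑ k, (pd j (fun y => g y i k) x + pd k (fun y => g y j i) x
        - pd i (fun y => g y j k) x) * M j k := by
    simp only [Finset.mul_sum, ← mul_assoc, ← sum_mul_christoffel hdet, Finset.sum_mul]
    rw [Finset.sum_comm]
    exact Finset.sum_congr rfl fun j _ => Finset.sum_comm
  have hderiv_j : ∑ j, ∑ k, pd j (fun y => g y i k) x * M j k =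
      ∑ j, ∑ k, M k j * pd j (fun y => g y i k) x := by
    simp only [hM.apply, mul_comm]
  have hderiv_k : ∑ j, ∑ k, pd k (fun y => g y j i) x * M j k =
      ∑ j, ∑ k, M k j * pd j (fun y => g y i k) x := by
    rw [Finset.sum_comm]
    refine Finset.sum_congr rfl fun j _ => Finset.sum_congr rfl fun k _ => ?_
    rw [mul_comm, pd_congr j (hsymm.mono fun y hy => hy.apply i k)]
  have hderiv_i : ∑ j, ∑ k, pd i (fun y => g y j k) x * M j k =
      ∑ j, ∑ k, M j k * pd i (fun y => g y j k) x := by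
    simp only [mul_comm]
  simp only [hlower, add_mul, sub_mul, Finset.sum_add_distrib, Finset.sum_sub_distrib, hderiv_j,
    hderiv_k, hderiv_i]
  ring

end Metric

section Divergence

variable {g T S : V3 → Matrix (Fin 3) (Fin 3) ℝ} {x : V3}

theorem covDivLow_add (hg : ∀ i j, DifferentiableAt ℝ (fun y => g y i j) x)
    (hdet : 0 < (g x).det) (hT : ∀ i j, DifferentiableAt ℝ (fun y => T y i j) x)
    (hS : ∀ i j, DifferentiableAt ℝ (fun y => S y i j) x) (i : Fin 3) :
    covDivLow g (fun y => T y + S y) i x = covDivLow g T i x + covDivLow g S i x := by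
  have hs := differentiableAt_sqrtDet hg hdet
  have hsplit (j : Fin 3) :
      pd j (fun y => sqrtDet g y * ∑ k, g y i k * (T y k j + S y k j)) x =
        pd j (fun y => sqrtDet g y * ∑ k, g y i k * T y k j) x +
          pd j (fun y => sqrtDet g y * ∑ k, g y i k * S y k j) x := by
    rw [← pd_add j (by fun_prop) (by fun_prop)]
    simp only [mul_add, Finset.sum_add_distrib]
  simp only [covDivLow, Matrix.add_apply, hsplit, add_mul, Finset.sum_add_distrib]
  ring

theorem covDivLow_const_smul (g T : V3 → Matrix (Fin 3) (Fin 3) ℝ) (a : ℝ) (i : Fin 3) :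
    covDivLow g (fun y => a • T y) i x = a * covDivLow g T i x := by
  simp only [covDivLow, Matrix.smul_apply, smul_eq_mul, mul_left_comm _ a, ← Finset.mul_sum,
    pd_const_mul, mul_assoc a]
  ring

theorem mulVec_covDivUp (hg : ∀ i j, DifferentiableAt ℝ (fun y => g y i j) x)
    (hsymm : ∀ᶠ y in 𝓝 x, (g y).IsSymm) (hdet : 0 < (g x).det)
    (hT : ∀ i j, DifferentiableAt ℝ (fun y => T y i j) x) (hTsymm : (T x).IsSymm) :
    g x *ᵥ (fun i => covDivUp g T i x) = fun i => covDivLow g T i x := by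
  have hs := differentiableAt_sqrtDet hg hdet
  have hs0 := sqrtDet_ne_zero hdet
  ext i
  have hflux (j : Fin 3) : pd j (fun y => sqrtDet g y * ∑ k, g y i k * T y k j) x =
      ∑ k, g x i k * pd j (fun y => sqrtDet g y * T y k j) x +
        sqrtDet g x * ∑ k, T x k j * pd j (fun y => g y i k) x := by
    simp only [Finset.mul_sum, mul_left_comm (sqrtDet g _)]
    rw [pd_sum j fun k => by fun_prop, ← Finset.sum_add_distrib]
    refine Finset.sum_congr rfl fun k _ => ?_
    rw [pd_mul j (by fun_prop) (by fun_prop)]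
    ring
  have hdiv : ∑ l, g x i l * ((sqrtDet g x)⁻¹ * ∑ j, pd j (fun y => sqrtDet g y * T y l j) x) =
      (sqrtDet g x)⁻¹ * ∑ j, ∑ l, g x i l * pd j (fun y => sqrtDet g y * T y l j) x := by
    rw [Finset.sum_comm]
    simp only [Finset.mul_sum, mul_left_comm]
  simp only [mulVec, dotProduct, covDivUp, covDivLow, mul_add, Finset.sum_add_distrib, hdiv, hflux,
    sum_mul_sum_christoffel_mul hsymm hdet.ne' hTsymm, ← Finset.mul_sum, inv_mul_cancel_left₀ hs0]
  ring

theorem covDivUp_eq_zero_iff_covDivLow_eq_zero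
    (hg : ∀ i j, DifferentiableAt ℝ (fun y => g y i j) x)
    (hsymm : ∀ᶠ y in 𝓝 x, (g y).IsSymm) (hdet : 0 < (g x).det)
    (hT : ∀ i j, DifferentiableAt ℝ (fun y => T y i j) x) (hTsymm : (T x).IsSymm) :
    (∀ i, covDivUp g T i x = 0) ↔ ∀ i, covDivLow g T i x = 0 := by
  have hmul := mulVec_covDivUp hg hsymm hdet hT hTsymm
  have hinj := mulVec_injective_of_det_ne_zero hdet.ne'
  calc (∀ i, covDivUp g T i x = 0)
      ↔ (fun i => covDivUp g T i x) = 0 := funext_iff.symm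
    _ ↔ g x *ᵥ (fun i => covDivUp g T i x) = 0 := by rw [← hinj.eq_iff, mulVec_zero]
    _ ↔ ∀ i, covDivLow g T i x = 0 := by rw [hmul, funext_iff]; rfl

theorem covDivLow_inv (hg : ∀ i j, DifferentiableAt ℝ (fun y => g y i j) x)
    (hsymm : (g x).IsSymm) (hdet : 0 < (g x).det) (i : Fin 3) :
    covDivLow g (fun y => (g y)⁻¹) i x = 0 := by
  have hkron (j : Fin 3) : pd j (fun y => sqrtDet g y * ∑ k, g y i k * (g y)⁻¹ k j) x =
      (1 : Matrix (Fin 3) (Fin 3) ℝ) i j * pd j (sqrtDet g) x := by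
    rw [← pd_const_mul]
    refine pd_congr j ((eventually_det_pos hg hdet).mono fun y hy => ?_)
    dsimp only
    rw [← Matrix.mul_apply, mul_nonsing_inv _ hy.ne'.isUnit, mul_comm]
  rw [covDivLow]
  simp only [hkron, Matrix.one_apply, ite_mul, one_mul, zero_mul, Finset.sum_ite_eq,
    Finset.mem_univ, if_true, pd_sqrtDet hg hdet, inv_mul_cancel_left₀ (sqrtDet_ne_zero hdet),
    hsymm.inv.apply, sub_self]

theorem covDivLow_single (f : V3 → ℝ) (m i : Fin 3) :
    covDivLow g (fun y => Matrix.single m m (f y)) i x =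
      (sqrtDet g x)⁻¹ * pd m (fun y => sqrtDet g y * f y * g y i m) x -
        (1 / 2) * (f x * pd i (fun y => g y m m) x) := by
  have hlower (y : V3) (j : Fin 3) :
      ∑ k, g y i k * Matrix.single m m (f y) k j = if m = j then f y * g y i m else 0 := by
    simp [Matrix.single_apply, ite_and, mul_comm]
  have hflux (j : Fin 3) :
      pd j (fun y => sqrtDet g y * if m = j then f y * g y i m else 0) x =
        if m = j then pd j (fun y => sqrtDet g y * f y * g y i m) x else 0 := by
    split_ifs <;> simp [mul_assoc, pd_const]
  simp only [covDivLow, hlower, hflux]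
  simp [Matrix.single_apply, ite_and]

-- `hgeod` is the lowered form of `Γ^i_{mm} = 0`: the `x^m`-coordinate lines are geodesics.
theorem covDivLow_single_div_sqrtDet (hg : ∀ i j, DifferentiableAt ℝ (fun y => g y i j) x)
    (hdet : 0 < (g x).det) {b : V3 → ℝ} {m : Fin 3} (hb : DifferentiableAt ℝ b x)
    (hbm : pd m b x = 0)
    (hgeod : ∀ i, pd m (fun y => g y i m) x = (1 / 2) * pd i (fun y => g y m m) x) (i : Fin 3) :
    covDivLow g (fun y => Matrix.single m m (b y / sqrtDet g y)) i x = 0 := by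
  have hflux : pd m (fun y => sqrtDet g y * (b y / sqrtDet g y) * g y i m) x =
      b x * pd m (fun y => g y i m) x := by
    have hcancel : (fun y => sqrtDet g y * (b y / sqrtDet g y) * g y i m) =ᶠ[𝓝 x]
        fun y => b y * g y i m :=
      (eventually_det_pos hg hdet).mono fun y hy => by
        dsimp only; rw [mul_div_cancel₀ _ (sqrtDet_ne_zero hy)]
    rw [pd_congr m hcancel, pd_mul m hb (hg i m), hbm, mul_zero, add_zero]
  rw [covDivLow_single, hflux, hgeod]
  ring

theorem covDivUp_single_add_smul_inv_eq_zero
    (hg : ∀ i j, DifferentiableAt ℝ (fun y => g y i j) x)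
    (hsymm : ∀ᶠ y in 𝓝 x, (g y).IsSymm) (hdet : 0 < (g x).det) {b : V3 → ℝ} {m : Fin 3}
    (hb : DifferentiableAt ℝ b x) (hbm : pd m b x = 0)
    (hgeod : ∀ i, pd m (fun y => g y i m) x = (1 / 2) * pd i (fun y => g y m m) x)
    (c : ℝ) (i : Fin 3) :
    covDivUp g (fun y => Matrix.single m m (b y / sqrtDet g y) + c • (g y)⁻¹) i x = 0 := by
  have hsingle (i j : Fin 3) :
      DifferentiableAt ℝ (fun y => Matrix.single m m (b y / sqrtDet g y) i j) x := by
    have hquot : DifferentiableAt ℝ (fun y => b y / sqrtDet g y) x :=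
      have hs := differentiableAt_sqrtDet hg hdet
      have hs0 := sqrtDet_ne_zero hdet
      by fun_prop (disch := exact hs0)
    simp only [Matrix.single_apply]
    split_ifs <;> fun_prop
  have hinv (i j : Fin 3) : DifferentiableAt ℝ (fun y => (c • (g y)⁻¹) i j) x :=
    (differentiableAt_inv_apply hg hdet.ne' i j).const_smul c
  have hT (i j : Fin 3) : DifferentiableAt ℝ
      (fun y => (Matrix.single m m (b y / sqrtDet g y) + c • (g y)⁻¹) i j) x :=
    (hsingle i j).fun_add (hinv i j)
  have hTsymm : (Matrix.single m m (b x / sqrtDet g x) + c • (g x)⁻¹).IsSymm :=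
    .add (transpose_single ..) (.smul hsymm.self_of_nhds.inv c)
  refine (covDivUp_eq_zero_iff_covDivLow_eq_zero
    (T := fun y => Matrix.single m m (b y / sqrtDet g y) + c • (g y)⁻¹)
    hg hsymm hdet hT hTsymm).2 (fun i => ?_) i
  rw [covDivLow_add hg hdet hsingle hinv, covDivLow_single_div_sqrtDet hg hdet hb hbm hgeod,
    covDivLow_const_smul, covDivLow_inv hg hsymm.self_of_nhds hdet, mul_zero, add_zero]

end Divergence

section KaluzaKlein

/-- The matrix of the quadratic form `(dz + β₁ dx¹ + β₂ dx²)² + h_{ab} dx^a dx^b`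
in the coordinates `(x¹, x², z)`. -/
def kaluzaKlein {R : Type*} [CommSemiring R] (h : Matrix (Fin 2) (Fin 2) R) (β₁ β₂ : R) :
    Matrix (Fin 3) (Fin 3) R :=
  !![h 0 0 + β₁ * β₁, h 0 1 + β₁ * β₂, β₁;
     h 1 0 + β₂ * β₁, h 1 1 + β₂ * β₂, β₂;
     β₁, β₂, 1]

theorem det_kaluzaKlein {R : Type*} [CommRing R] (h : Matrix (Fin 2) (Fin 2) R) (β₁ β₂ : R) :
    (kaluzaKlein h β₁ β₂).det = h.det := by
  simp only [kaluzaKlein, det_fin_three, det_fin_two, of_apply, cons_val]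
  ring

theorem isSymm_kaluzaKlein {R : Type*} [CommSemiring R] {h : Matrix (Fin 2) (Fin 2) R}
    (hh : h.IsSymm) (β₁ β₂ : R) : (kaluzaKlein h β₁ β₂).IsSymm := by
  refine .ext fun i j => ?_
  fin_cases i <;> fin_cases j <;> simp [kaluzaKlein, hh.apply 0 1, mul_comm]

variable {h : V3 → Matrix (Fin 2) (Fin 2) ℝ} {β₁ β₂ : V3 → ℝ} {x : V3}

theorem differentiableAt_kaluzaKlein_apply (hh : ∀ a b, DifferentiableAt ℝ (fun y => h y a b) x)
    (hβ₁ : DifferentiableAt ℝ β₁ x) (hβ₂ : DifferentiableAt ℝ β₂ x) (i j : Fin 3) :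
    DifferentiableAt ℝ (fun y => kaluzaKlein (h y) (β₁ y) (β₂ y) i j) x := by
  fin_cases i <;> fin_cases j
  exacts [(hh 0 0).fun_add (hβ₁.fun_mul hβ₁), (hh 0 1).fun_add (hβ₁.fun_mul hβ₂), hβ₁,
    (hh 1 0).fun_add (hβ₂.fun_mul hβ₁), (hh 1 1).fun_add (hβ₂.fun_mul hβ₂), hβ₂,
    hβ₁, hβ₂, differentiableAt_const 1]

theorem pd_two_kaluzaKlein_apply_two (hβ₁ : pd 2 β₁ x = 0) (hβ₂ : pd 2 β₂ x = 0) (i : Fin 3) :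
    pd 2 (fun y => kaluzaKlein (h y) (β₁ y) (β₂ y) i 2) x = 0 := by
  fin_cases i
  exacts [hβ₁, hβ₂, pd_const 2 1]

end KaluzaKlein

theorem momentum_constraint_solutions_3u_3b_general
    (U : Set V3) (hU : IsOpen U)
    (h : V3 → Matrix (Fin 2) (Fin 2) ℝ) (β₁ β₂ β : V3 → ℝ) (c ε : ℝ)
    (hh : ∀ a b, DifferentiableOn ℝ (fun x => h x a b) U)
    (hh_symm : ∀ x ∈ U, (h x).IsSymm) (hh_det : ∀ x ∈ U, 0 < (h x).det)
    (hβ₁ : DifferentiableOn ℝ β₁ U) (hβ₂ : DifferentiableOn ℝ β₂ U) (hβ : DifferentiableOn ℝ β U)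
    (hβ₁_ind : ∀ x ∈ U, pd 2 β₁ x = 0) (hβ₂_ind : ∀ x ∈ U, pd 2 β₂ x = 0)
    (hβ_ind : ∀ x ∈ U, pd 2 β x = 0) :
    let g : V3 → Matrix (Fin 3) (Fin 3) ℝ := fun x => kaluzaKlein (h x) (β₁ x) (β₂ x)
    let T : V3 → Matrix (Fin 3) (Fin 3) ℝ := fun x =>
      Matrix.of fun i j =>
        ε * (β x * (Real.sqrt (h x).det)⁻¹ * (if i = 2 ∧ j = 2 then 1 else 0) +
          c * (g x)⁻¹ i j)
    ∀ i, ∀ x ∈ U, covDivUp g T i x = 0 := by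
  intro g T i x hx
  have hUx := hU.mem_nhds hx
  have hT : T = fun y => Matrix.single 2 2 (ε * β y / sqrtDet g y) + (ε * c) • (g y)⁻¹ := by
    ext y i j
    simp only [T, g, sqrtDet, det_kaluzaKlein, Matrix.of_apply, Matrix.add_apply,
      Matrix.smul_apply, Matrix.single_apply, eq_comm (a := (2 : Fin 3)), smul_eq_mul]
    split_ifs <;> ring
  rw [hT]
  refine covDivUp_single_add_smul_inv_eq_zero
    (differentiableAt_kaluzaKlein_apply (fun a b => (hh a b).differentiableAt hUx)
      (hβ₁.differentiableAt hUx) (hβ₂.differentiableAt hUx))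
    (Filter.eventually_of_mem hUx fun y hy => isSymm_kaluzaKlein (hh_symm y hy) _ _)
    ((det_kaluzaKlein ..).trans_gt (hh_det x hx))
    ((hβ.differentiableAt hUx).const_mul ε) (by rw [pd_const_mul, hβ_ind x hx, mul_zero])
    (fun j => ?_) (ε * c) i
  rw [pd_two_kaluzaKlein_apply_two (hβ₁_ind x hx) (hβ₂_ind x hx)]
  exact (mul_eq_zero_of_right _ (pd_const j 1)).symm

/-- **Second family of solutions in Proposition 3.2, equations (3u)–(3b)**: for the metric
`g = (dz + β₁dx¹ + β₂dx²)² + h_{ab} dx^a dx^b` with `β₁, β₂` independent of `z = x³`, and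
`β > 0` independent of `z`, the tensor
`T^{ij} = ±(β (det h)^{-1/2} δ^i_z δ^j_z + c g^{ij})` satisfies the momentum constraint
`∇_j T^{ij} = 0`. -/
theorem momentum_constraint_solutions_3u_3b
    (U : Set V3) (hU : IsOpen U)
    (h : V3 → Matrix (Fin 2) (Fin 2) ℝ) (β₁ β₂ β : V3 → ℝ) (c ε : ℝ)
    (hε : ε = 1 ∨ ε = -1)
    (hh_smooth : ∀ a b, ContDiffOn ℝ (⊤ : ℕ∞) (fun x => h x a b) U)
    (hh_pos : ∀ x ∈ U, (h x).PosDef)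
    (hβ₁_smooth : ContDiffOn ℝ (⊤ : ℕ∞) β₁ U)
    (hβ₂_smooth : ContDiffOn ℝ (⊤ : ℕ∞) β₂ U)
    (hβ₁_ind : ∀ x t, β₁ (Function.update x 2 t) = β₁ x)
    (hβ₂_ind : ∀ x t, β₂ (Function.update x 2 t) = β₂ x)
    (hβ_smooth : ContDiffOn ℝ (⊤ : ℕ∞) β U) (hβ_pos : ∀ x ∈ U, 0 < β x)
    (hβ_ind : ∀ x t, β (Function.update x 2 t) = β x) :
    let g : V3 → Matrix (Fin 3) (Fin 3) ℝ := fun x =>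
      !![h x 0 0 + β₁ x * β₁ x, h x 0 1 + β₁ x * β₂ x, β₁ x;
         h x 1 0 + β₂ x * β₁ x, h x 1 1 + β₂ x * β₂ x, β₂ x;
         β₁ x, β₂ x, 1]
    let T : V3 → Matrix (Fin 3) (Fin 3) ℝ := fun x =>
      Matrix.of fun i j =>
        ε * (β x * (Real.sqrt (h x).det)⁻¹ * (if i = 2 ∧ j = 2 then 1 else 0) +
          c * (g x)⁻¹ i j)
    ∀ i, ∀ x ∈ U, covDivUp g T i x = 0 := by
  have hdiff {f : V3 → ℝ} (hf : ContDiffOn ℝ (⊤ : ℕ∞) f U) : DifferentiableOn ℝ f U :=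
    hf.differentiableOn (by simp)
  have hpd {f : V3 → ℝ} (hf : ContDiffOn ℝ (⊤ : ℕ∞) f U)
      (hind : ∀ x t, f (Function.update x 2 t) = f x) (x : V3) (hx : x ∈ U) : pd 2 f x = 0 :=
    pd_eq_zero_of_update_eq ((hdiff hf).differentiableAt (hU.mem_nhds hx)) (hind x)
  exact momentum_constraint_solutions_3u_3b_general U hU h β₁ β₂ β c ε
    (fun a b => hdiff (hh_smooth a b)) (fun x hx => (hh_pos x hx).isHermitian)
    (fun x hx => (hh_pos x hx).det_pos) (hdiff hβ₁_smooth) (hdiff hβ₂_smooth) (hdiff hβ_smooth)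
    (hpd hβ₁_smooth hβ₁_ind) (hpd hβ₂_smooth hβ₂_ind) (hpd hβ_smooth hβ_ind)
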